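/- Let X be a real vector space, Z a nonempty set, φ : Z × X → Z with φ(z,0) = z for all z, and g : Z → EReal. Suppose that for every z ∈ Z there exists a linear functional ξ_z : X → ℝ such that g(φ(z,d)) ≤ g(z) + ξ_z(d) for all d ∈ X (addition in EReal). Then Ag = g. -/

import Mathlib

/-- An `EReal`-valued function on a real vector space is concave
(with the convention `⊤ + ⊥ = ⊥` of `EReal`). -/
def IsEConcave {X : Type*} [AddCommGroup X] [Module ℝ X] (ψ : X → EReal) : Prop :=
  ∀ x y : X, ∀ a b : ℝ, 0 ≤ a → 0 ≤ b → a + b = 1 →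
    (a : EReal) * ψ x + (b : EReal) * ψ y ≤ ψ (a • x + b • y)

/-- The concave envelope `g^♯` of `g : X → EReal`: the pointwise infimum of all
concave functions dominating `g`. -/
noncomputable def concaveEnvelope {X : Type*} [AddCommGroup X] [Module ℝ X]
    (g : X → EReal) (x : X) : EReal :=
  ⨅ ψ : {ψ : X → EReal // IsEConcave ψ ∧ ∀ y, g y ≤ ψ y}, ψ.1 x

/-- The operator `A`: `Ag(z) = (g ∘ φ(z,·))^♯(0)`. -/
noncomputable def Aop {X Z : Type*} [AddCommGroup X] [Module ℝ X]
    (φ : Z → X → Z) (g : Z → EReal) : Z → EReal :=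
  fun z => concaveEnvelope (fun d => g (φ z d)) 0

section ConcaveEnvelope

variable {X : Type*} [AddCommGroup X] [Module ℝ X]

theorem isEConcave_const (c : EReal) : IsEConcave fun _ : X => c := by
  intro _ _ a b ha hb hab
  rw [← EReal.right_distrib_of_nonneg (EReal.coe_nonneg.mpr ha) (EReal.coe_nonneg.mpr hb),
    ← EReal.coe_add, hab, EReal.coe_one, one_mul]

theorem isEConcave_coe {f : X → ℝ} (hf : ConcaveOn ℝ Set.univ f) :
    IsEConcave fun x => (f x : EReal) := by
  intro x y a b ha hb hab
  beta_reduce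
  exact_mod_cast hf.2 (Set.mem_univ x) (Set.mem_univ y) ha hb hab

theorem IsEConcave.add {ψ₁ ψ₂ : X → EReal} (h₁ : IsEConcave ψ₁) (h₂ : IsEConcave ψ₂) :
    IsEConcave fun x => ψ₁ x + ψ₂ x := by
  intro x y a b ha hb hab
  -- A nonnegative real factor distributes over every sum in `EReal`, including `⊤ + ⊥`.
  have distrib {c : ℝ} (hc : 0 ≤ c) (u v : EReal) : (c : EReal) * (u + v) = c * u + c * v :=
    EReal.left_distrib_of_nonneg_of_ne_top (EReal.coe_nonneg.mpr hc) (EReal.coe_ne_top c) u v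
  calc (a : EReal) * (ψ₁ x + ψ₂ x) + b * (ψ₁ y + ψ₂ y)
      = (a * ψ₁ x + b * ψ₁ y) + (a * ψ₂ x + b * ψ₂ y) := by
        rw [distrib ha, distrib hb, add_add_add_comm]
    _ ≤ ψ₁ (a • x + b • y) + ψ₂ (a • x + b • y) :=
        add_le_add (h₁ x y a b ha hb hab) (h₂ x y a b ha hb hab)

theorem le_concaveEnvelope (f : X → EReal) (x : X) : f x ≤ concaveEnvelope f x :=
  le_iInf fun ψ => ψ.2.2 x

theorem concaveEnvelope_le {f ψ : X → EReal} (hψ : IsEConcave ψ) (hf : ∀ y, f y ≤ ψ y) (x : X) :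
    concaveEnvelope f x ≤ ψ x :=
  iInf_le _ (⟨ψ, hψ, hf⟩ : {ψ : X → EReal // IsEConcave ψ ∧ ∀ y, f y ≤ ψ y})

theorem concaveEnvelope_eq_of_le_add {f ψ : X → EReal} {x : X} (hψ : IsEConcave ψ)
    (hψx : ψ x ≤ 0) (hf : ∀ y, f y ≤ f x + ψ y) : concaveEnvelope f x = f x := by
  refine le_antisymm ?_ (le_concaveEnvelope f x)
  calc concaveEnvelope f x
      ≤ f x + ψ x := concaveEnvelope_le ((isEConcave_const (f x)).add hψ) hf x
    _ ≤ f x := add_le_of_nonpos_right hψx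

end ConcaveEnvelope

theorem Aop_fixed_of_gradientIneq_general {X Z : Type*} [AddCommGroup X] [Module ℝ X]
    (φ : Z → X → Z) (hφ : ∀ z, φ z 0 = z) (g : Z → EReal)
    (h : ∀ z : Z, ∃ ψ : X → EReal, IsEConcave ψ ∧ ψ 0 ≤ 0 ∧ ∀ d : X, g (φ z d) ≤ g z + ψ d) :
    Aop φ g = g := by
  funext z
  obtain ⟨ψ, hψ, hψ0, hle⟩ := h z
  have touching : concaveEnvelope (fun d => g (φ z d)) 0 = g (φ z 0) :=
    concaveEnvelope_eq_of_le_add hψ hψ0 fun d => by simpa only [hφ] using hle d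
  rwa [hφ] at touching

/-- If for every `z` there is a linear functional `ξ_z : X → ℝ` with
`g(φ(z,d)) ≤ g(z) + ξ_z(d)` for all `d`, then `Ag = g`. -/
theorem Aop_fixed_of_gradientIneq {X Z : Type*} [AddCommGroup X] [Module ℝ X] [Nonempty Z]
    (φ : Z → X → Z) (hφ : ∀ z, φ z 0 = z) (g : Z → EReal)
    (h : ∀ z : Z, ∃ ξ : X →ₗ[ℝ] ℝ, ∀ d : X, g (φ z d) ≤ g z + ((ξ d : ℝ) : EReal)) :
    Aop φ g = g := by
  refine Aop_fixed_of_gradientIneq_general φ hφ g fun z => (h z).elim fun ξ hξ => ?_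
  exact ⟨fun d => (ξ d : EReal), isEConcave_coe (ξ.concaveOn convex_univ), by simp, hξ⟩
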